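/- Let Y be a Banach space and f : X → Y μ-measurable with ‖f‖ μ-integrable on X, and fix ε > 0. Given λ ≥ 1 and any μ-a.e. λ-Morse cover 𝒮 of X, there is a gauge function δ : X → (0,1] such that for every finite or countably infinite sequence ⟨S_i(x_i)⟩ of δ-fine sets from 𝒮 that is μ-exhausting of X, the simple-type function Σ_i f(x_i)·χ_{S_i} approximates f in the sense that ∫_X ‖f(y) − Σ_i f(x_i)χ_{S_i}(y)‖ dμ(y) < ε, and moreover the absolute sum of local errors is small: Σ_i ‖∫_{S_i} f dμ − f(x_i)·μ(S_i)‖ < ε, where ∫_{S_i} f dμ denotes the Bochner integral of f over S_i. -/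

import Mathlib

open MeasureTheory Set Metric Filter

/-- `S` is a `λ`-Morse set with tag `a`: for some `r > 0`, `B(a,r) ⊆ S ⊆ B(a,λr)`
(closed balls) and `S` is starlike with respect to `B(a,r)`. -/
def IsMorseSet {X : Type*} [NormedAddCommGroup X] [NormedSpace ℝ X]
    (lam : ℝ) (a : X) (S : Set X) : Prop :=
  ∃ r > (0:ℝ), Metric.closedBall a r ⊆ S ∧ S ⊆ Metric.closedBall a (lam * r) ∧
    ∀ y ∈ Metric.closedBall a r, ∀ x ∈ S, segment ℝ y x ⊆ S

/-- `𝒮` (a collection of tagged sets) is a fine, measurable, `λ`-Morse cover of `Ω`: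
every member is a measurable λ-Morse subset of `Ω` with the indicated tag, and every point
of `Ω` is the tag of sets of `𝒮` of arbitrarily small diameter. -/
def IsFineMorseCover {X : Type*} [NormedAddCommGroup X] [NormedSpace ℝ X] [MeasurableSpace X]
    (lam : ℝ) (Ω : Set X) (𝒮 : Set (X × Set X)) : Prop :=
  (∀ p ∈ 𝒮, IsMorseSet lam p.1 p.2 ∧ MeasurableSet p.2 ∧ p.2 ⊆ Ω) ∧
  ∀ a ∈ Ω, ∀ ε > (0:ℝ), ∃ S : Set X, (a, S) ∈ 𝒮 ∧ Metric.diam S < ε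

/-- The (finite or countably infinite) sequence of tagged sets `T` indexed by `I ⊆ ℕ`
is `μ`-exhausting of `Ω` within the collection `𝒮`: its members belong to `𝒮`,
are pairwise disjoint, and cover all but a `μ`-null subset of `Ω`. -/
def IsExhausting {X : Type*} [MeasurableSpace X] (μ : Measure X) (Ω : Set X)
    (𝒮 : Set (X × Set X)) (I : Set ℕ) (T : ℕ → X × Set X) : Prop :=
  (∀ i ∈ I, T i ∈ 𝒮) ∧
  (∀ i ∈ I, ∀ j ∈ I, i ≠ j → Disjoint (T i).2 (T j).2) ∧
  μ (Ω \ ⋃ i ∈ I, (T i).2) = 0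

/-- `𝒮` is a `μ`-a.e. `λ`-Morse cover of `Ω`: it is a fine measurable λ-Morse cover and,
for every nonempty open `U ⊆ Ω` and every gauge `δ : U → (0,1]`, there is a sequence of
`δ`-fine sets from `𝒮`, each contained in `U`, that is `μ`-exhausting of `U`. -/
def IsAEMorseCover {X : Type*} [NormedAddCommGroup X] [NormedSpace ℝ X] [MeasurableSpace X]
    (μ : Measure X) (lam : ℝ) (Ω : Set X) (𝒮 : Set (X × Set X)) : Prop :=
  IsFineMorseCover lam Ω 𝒮 ∧
  ∀ U : Set X, IsOpen U → U.Nonempty → U ⊆ Ω →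
    ∀ δ : X → ℝ, (∀ x ∈ U, δ x ∈ Set.Ioc (0:ℝ) 1) →
      ∃ I T, IsExhausting μ U 𝒮 I T ∧
        ∀ i ∈ I, (T i).2 ⊆ U ∧ (T i).2 ⊆ Metric.closedBall (T i).1 (δ (T i).1)

/-- `f` is `μ`-measurable: there is a sequence of simple functions converging to `f`
`μ`-almost everywhere. -/
def MuMeasurable {X Y : Type*} [MeasurableSpace X] [NormedAddCommGroup Y]
    (μ : Measure X) (f : X → Y) : Prop :=
  ∃ F : ℕ → MeasureTheory.SimpleFunc X Y,
    ∀ᵐ x ∂μ, Filter.Tendsto (fun n => F n x) Filter.atTop (nhds (f x))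

/-- `a` is a point of approximate continuity of `f` (relative to the tagged collection
`𝒮`): for all `ε, η > 0` there is `R > 0` such that every `S ∈ 𝒮` with tag `a` contained
in `B(a,R)` satisfies `μ {x ∈ S | ‖f a - f x‖ > η} ≤ ε · μ S`. -/
def IsApproxContPt {X Y : Type*} [NormedAddCommGroup X] [MeasurableSpace X]
    [NormedAddCommGroup Y] (μ : Measure X) (𝒮 : Set (X × Set X)) (f : X → Y) (a : X) : Prop :=
  ∀ ε > (0:ℝ), ∀ η > (0:ℝ), ∃ R > (0:ℝ), ∀ S : Set X, (a, S) ∈ 𝒮 →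
    S ⊆ Metric.closedBall a R →
    μ {x ∈ S | η < ‖f a - f x‖} ≤ ENNReal.ofReal ε * μ S

/-- `a` is a Lebesgue point of `g` with respect to the value `c` (relative to the tagged
collection `𝒮`): for every `ε > 0` there is `R > 0` such that every `S ∈ 𝒮` with tag `a`
contained in `B(a,R)` satisfies `∫_S ‖g x - c‖ dμ ≤ ε · μ S`. -/
def IsLebesguePt {X Y : Type*} [NormedAddCommGroup X] [MeasurableSpace X]
    [NormedAddCommGroup Y] (μ : Measure X) (𝒮 : Set (X × Set X)) (g : X → Y) (a : X)
    (c : Y) : Prop :=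
  ∀ ε > (0:ℝ), ∃ R > (0:ℝ), ∀ S : Set X, (a, S) ∈ 𝒮 → S ⊆ Metric.closedBall a R →
    ∫⁻ x in S, ‖g x - c‖₊ ∂μ ≤ ENNReal.ofReal ε * μ S

/-!
The gauge comes from a single integrable function `w` of integral at most `ε' < ε` that controls
the oscillation of `f` at every point: `‖f y - f x‖ ≤ w y` for all `y` near `x`. To build it,
approximate `f` in `L¹` by a continuous `g` and use the Vitali–Carathéodory theorem to take a lower
semicontinuous `v` with `‖f - g‖ < v` everywhere and small integral. By lower semicontinuity of `v`
and continuity of `g`, `‖f x - g x‖ + ‖g x - g y‖ < v y` for `y` near `x`, so `w = v + v` works.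
If `δ x` is the radius of a ball on which the control holds, both errors of a `δ`-fine exhausting
sequence are bounded by `∫ w`.

These approximation theorems concern Borel measures, whereas the `σ`-algebra of `X` may be larger
than the Borel one. Outer regularity bridges the gap: `μ` and its restriction to the Borel sets
agree as outer measures, hence have the same null sets.
-/

open scoped ENNReal Topology

section BorelTrim

variable {X : Type*} [TopologicalSpace X] [MeasurableSpace X] [OpensMeasurableSpace X]

/-- The restriction of a measure to the Borel `σ`-algebra, as a measure on that `σ`-algebra. -/
noncomputable def borelTrim (μ : Measure X) : Measure[borel X] X :=
  μ.trim OpensMeasurableSpace.borel_le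

variable (μ : Measure X)

theorem borelTrim_apply [μ.OuterRegular] (s : Set X) : borelTrim μ s = μ s := by
  refine le_antisymm (le_of_forall_gt fun r hr => ?_) (le_trim _)
  obtain ⟨U, hsU, hU, hUr⟩ := s.exists_isOpen_lt_of_lt r hr
  calc borelTrim μ s ≤ borelTrim μ U := measure_mono hsU
    _ = μ U := trim_measurableSet_eq _ (MeasurableSpace.measurableSet_generateFrom hU)
    _ < r := hUr

theorem ae_borelTrim [μ.OuterRegular] : ae (borelTrim μ) = ae μ :=
  Filter.ext fun s => by rw [mem_ae_iff, mem_ae_iff, borelTrim_apply]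

theorem weaklyRegular_borelTrim [μ.WeaklyRegular] :
    @Measure.WeaklyRegular X (borel X) _ (borelTrim μ) := by
  refine @Measure.WeaklyRegular.mk X (borel X) _ _
    (@Measure.OuterRegular.mk X (borel X) _ _ fun s _ r hr => ?_) fun U hU r hr => ?_
  · rw [borelTrim_apply] at hr
    simpa only [borelTrim_apply] using s.exists_isOpen_lt_of_lt r hr
  · rw [borelTrim_apply] at hr
    simpa only [borelTrim_apply] using hU.exists_lt_isClosed hr

theorem sigmaFinite_borelTrim [μ.OuterRegular] [SigmaFinite μ] : SigmaFinite (borelTrim μ) := by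
  refine Measure.sigmaFinite_of_countable (countable_range (spanningSets μ)) ?_
    (iUnion_spanningSets μ)
  rintro _ ⟨n, rfl⟩
  rw [borelTrim_apply]
  exact measure_spanningSets_lt_top μ n

variable {μ}

theorem nullMeasurableSet_borelTrim_of_ne_top [μ.OuterRegular] {s : Set X}
    (hs : NullMeasurableSet s μ) (hμs : μ s ≠ ∞) :
    @NullMeasurableSet X (borel X) s (borelTrim μ) := by
  let t := @toMeasurable X (borel X) (borelTrim μ) s
  have ht : MeasurableSet[borel X] t := @measurableSet_toMeasurable X (borel X) _ _
  have hμt : μ t = μ s := by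
    simpa only [borelTrim_apply] using @measure_toMeasurable X (borel X) (borelTrim μ) s
  have hst : s =ᵐ[μ] t := ae_eq_of_subset_of_measure_ge
    (@subset_toMeasurable X (borel X) _ _) hμt.le hs (hμt.trans_ne hμs)
  exact @NullMeasurableSet.congr X (borel X) _ t s
    (@MeasurableSet.nullMeasurableSet X (borel X) _ _ ht) (by rw [ae_borelTrim]; exact hst.symm)

theorem nullMeasurableSet_borelTrim [μ.OuterRegular] [SigmaFinite μ] {s : Set X}
    (hs : NullMeasurableSet s μ) : @NullMeasurableSet X (borel X) s (borelTrim μ) := by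
  have hs_iUnion : s = ⋃ n, s ∩ spanningSets μ n := by
    rw [← inter_iUnion, iUnion_spanningSets, inter_univ]
  rw [hs_iUnion]
  exact NullMeasurableSet.iUnion fun n => nullMeasurableSet_borelTrim_of_ne_top
    (hs.inter (measurableSet_spanningSets μ n).nullMeasurableSet)
    (measure_ne_top_of_subset inter_subset_right (measure_spanningSets_lt_top μ n).ne)

theorem aestronglyMeasurable_borelTrim {Y : Type*} [TopologicalSpace Y]
    [TopologicalSpace.PseudoMetrizableSpace Y] [μ.OuterRegular] [SigmaFinite μ] {f : X → Y}
    (hf : AEStronglyMeasurable f μ) :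
    AEStronglyMeasurable[borel X] f (borelTrim μ) := by
  borelize Y
  obtain ⟨hf_null, t, ht, hft⟩ := aestronglyMeasurable_iff_nullMeasurable_separable.1 hf
  refine aestronglyMeasurable_iff_nullMeasurable_separable.2
    ⟨fun _ hs => nullMeasurableSet_borelTrim (hf_null hs), t, ht, ?_⟩
  rwa [ae_borelTrim]

theorem integrable_borelTrim {E : Type*} [NormedAddCommGroup E] [μ.OuterRegular] [SigmaFinite μ]
    {f : X → E} (hf : Integrable f μ) : Integrable f (borelTrim μ) := by
  have hf_meas := aestronglyMeasurable_borelTrim hf.aestronglyMeasurable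
  refine ⟨hf_meas, ?_⟩
  calc ∫⁻ x, ‖f x‖ₑ ∂borelTrim μ = ∫⁻ x, ‖f x‖ₑ ∂μ := lintegral_trim_ae _ hf_meas.enorm
    _ < ∞ := hf.hasFiniteIntegral

end BorelTrim

section OscillationControl

variable {X E : Type*} [TopologicalSpace X] [NormedAddCommGroup E]

theorem eventually_enorm_sub_le_add_self {f g : X → E} {v : X → ℝ≥0∞} (hg : Continuous g)
    (hv : LowerSemicontinuous v) (hfg : ∀ x, ‖f x - g x‖ₑ < v x) (x : X) :
    ∀ᶠ y in 𝓝 x, ‖f y - f x‖ₑ ≤ v y + v y := by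
  obtain ⟨c, hc, hcv⟩ := exists_between (hfg x)
  have hcont : Continuous fun y => ‖f x - g x‖ₑ + ‖g x - g y‖ₑ := by fun_prop
  have hnear : ∀ᶠ y in 𝓝 x, ‖f x - g x‖ₑ + ‖g x - g y‖ₑ < c :=
    hcont.continuousAt.eventually_lt_const (by simpa using hc)
  filter_upwards [hv x c hcv, hnear] with y hcvy hy
  calc ‖f y - f x‖ₑ = ‖(f y - g y) - ((f x - g x) + (g x - g y))‖ₑ := by congr 1; abel
    _ ≤ ‖f y - g y‖ₑ + ‖(f x - g x) + (g x - g y)‖ₑ := enorm_sub_le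
    _ ≤ v y + v y :=
      add_le_add (hfg y).le ((enorm_add_le _ _).trans (hy.trans hcvy).le)

variable [NormalSpace X] [NormedSpace ℝ E]

theorem exists_measurable_eventually_enorm_sub_le_of_borelSpace [MeasurableSpace X] [BorelSpace X]
    {μ : Measure X} [μ.WeaklyRegular] [SigmaFinite μ] {f : X → E} (hf : Integrable f μ)
    {ε : ℝ≥0∞} (hε : ε ≠ 0) :
    ∃ w : X → ℝ≥0∞, Measurable w ∧ ∫⁻ x, w x ∂μ ≤ ε ∧
      ∀ x, ∀ᶠ y in 𝓝 x, ‖f y - f x‖ₑ ≤ w y := by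
  have hε₄ : ε / 2 / 2 ≠ 0 := (ENNReal.half_pos (ENNReal.half_pos hε).ne').ne'
  obtain ⟨g, hfg, hg⟩ := hf.exists_boundedContinuous_lintegral_sub_le hε₄
  obtain ⟨v, hfv, hv, hv_int⟩ := exists_lt_lowerSemicontinuous_lintegral_ge_of_aemeasurable μ
    (fun x => ‖f x - g x‖₊) (hf.sub hg).aestronglyMeasurable.nnnorm.aemeasurable hε₄
  have hv_le : ∫⁻ x, v x ∂μ ≤ ε / 2 :=
    calc ∫⁻ x, v x ∂μ ≤ ∫⁻ x, ‖f x - g x‖ₑ ∂μ + ε / 2 / 2 := hv_int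
      _ ≤ ε / 2 / 2 + ε / 2 / 2 := by gcongr
      _ = ε / 2 := ENNReal.add_halves _
  refine ⟨fun x => v x + v x, hv.measurable.add hv.measurable, ?_,
    eventually_enorm_sub_le_add_self g.continuous hv hfv⟩
  calc ∫⁻ x, v x + v x ∂μ = ∫⁻ x, v x ∂μ + ∫⁻ x, v x ∂μ := lintegral_add_left hv.measurable _
    _ ≤ ε / 2 + ε / 2 := add_le_add hv_le hv_le
    _ = ε := ENNReal.add_halves ε

theorem exists_measurable_eventually_enorm_sub_le [MeasurableSpace X] [OpensMeasurableSpace X]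
    {μ : Measure X} [μ.WeaklyRegular] [SigmaFinite μ] {f : X → E} (hf : Integrable f μ)
    {ε : ℝ≥0∞} (hε : ε ≠ 0) :
    ∃ w : X → ℝ≥0∞, Measurable w ∧ ∫⁻ x, w x ∂μ ≤ ε ∧
      ∀ x, ∀ᶠ y in 𝓝 x, ‖f y - f x‖ₑ ≤ w y := by
  obtain ⟨w, hw, hw_int, hfw⟩ := @exists_measurable_eventually_enorm_sub_le_of_borelSpace X E _ _ _
    _ (borel X) (@BorelSpace.mk X _ (borel X) rfl) (borelTrim μ) (weaklyRegular_borelTrim μ)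
    (sigmaFinite_borelTrim μ) f (integrable_borelTrim hf) ε hε
  exact ⟨w, hw.mono OpensMeasurableSpace.borel_le le_rfl,
    (lintegral_trim OpensMeasurableSpace.borel_le hw).symm.trans_le hw_int, hfw⟩

end OscillationControl

theorem exists_gauge_of_eventually {X : Type*} [PseudoMetricSpace X] {p : X → X → Prop}
    (hp : ∀ x, ∀ᶠ y in 𝓝 x, p x y) :
    ∃ δ : X → ℝ, (∀ x, δ x ∈ Ioc (0 : ℝ) 1) ∧ ∀ x, ∀ y ∈ closedBall x (δ x), p x y := by
  choose r hr hrp using fun x => nhds_basis_closedBall.eventually_iff.1 (hp x)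
  exact ⟨fun x => min (r x) 1, fun x => ⟨lt_min (hr x) one_pos, min_le_right _ _⟩,
    fun x _ hy => hrp x (closedBall_subset_closedBall (min_le_left _ _) hy)⟩

theorem tsum_indicator_const_of_mem {X E ι : Type*} [AddCommMonoid E] [TopologicalSpace E]
    {S : ι → Set X} {c : ι → E} (hS : Pairwise (Function.onFun Disjoint S)) {i : ι} {x : X}
    (hx : x ∈ S i) : ∑' j, (S j).indicator (fun _ => c j) x = c i := by
  rw [tsum_eq_single i fun j hji =>
    indicator_of_notMem (disjoint_right.1 (hS hji) hx) _, indicator_of_mem hx]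

section ErrorEstimates

variable {X E ι : Type*} [MeasurableSpace X] [NormedAddCommGroup E] {μ : Measure X}
  {f : X → E} {w : X → ℝ≥0∞} {S : ι → Set X} {c : ι → E}

theorem lintegral_enorm_sub_tsum_indicator_le (hS : Pairwise (Function.onFun Disjoint S))
    (hcover : ∀ᵐ x ∂μ, x ∈ ⋃ i, S i) (hw : ∀ i, ∀ x ∈ S i, ‖f x - c i‖ₑ ≤ w x) :
    ∫⁻ x, ‖f x - ∑' i, (S i).indicator (fun _ => c i) x‖ₑ ∂μ ≤ ∫⁻ x, w x ∂μ := by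
  refine lintegral_mono_ae (hcover.mono fun x hx => ?_)
  obtain ⟨i, hi⟩ := mem_iUnion.1 hx
  rw [tsum_indicator_const_of_mem hS hi]
  exact hw i x hi

variable [NormedSpace ℝ E] [CompleteSpace E]

theorem enorm_setIntegral_sub_measureReal_smul_le {s : Set X} (hs : MeasurableSet s) {a : E}
    (hf : IntegrableOn f s μ) (hw : ∀ x ∈ s, ‖f x - a‖ₑ ≤ w x) :
    ‖∫ x in s, f x ∂μ - μ.real s • a‖ₑ ≤ ∫⁻ x in s, w x ∂μ := by
  obtain hw_top | hw_top := eq_or_ne (∫⁻ x in s, w x ∂μ) ∞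
  · exact hw_top ▸ le_top
  have hle : ∫⁻ x in s, ‖f x - a‖ₑ ∂μ ≤ ∫⁻ x in s, w x ∂μ := setLIntegral_mono' hs hw
  have hfa : IntegrableOn (fun x => f x - a) s μ :=
    ⟨hf.aestronglyMeasurable.sub aestronglyMeasurable_const, hle.trans_lt hw_top.lt_top⟩
  -- The domination alone makes the constant integrable: if `μ s = ∞`, it forces `a = 0`.
  have ha : IntegrableOn (fun _ => a) s μ := by
    simpa only [Pi.sub_def, sub_sub_cancel] using hf.sub hfa
  calc ‖∫ x in s, f x ∂μ - μ.real s • a‖ₑ = ‖∫ x in s, (f x - a) ∂μ‖ₑ := by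
        rw [integral_sub hf ha, setIntegral_const]
    _ ≤ ∫⁻ x in s, ‖f x - a‖ₑ ∂μ := enorm_integral_le_lintegral_enorm _
    _ ≤ ∫⁻ x in s, w x ∂μ := hle

theorem tsum_enorm_setIntegral_sub_measureReal_smul_le [Countable ι]
    (hS_meas : ∀ i, MeasurableSet (S i)) (hS : Pairwise (Function.onFun Disjoint S))
    (hf : Integrable f μ) (hw : ∀ i, ∀ x ∈ S i, ‖f x - c i‖ₑ ≤ w x) :
    ∑' i, ‖∫ x in S i, f x ∂μ - μ.real (S i) • c i‖ₑ ≤ ∫⁻ x, w x ∂μ :=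
  calc ∑' i, ‖∫ x in S i, f x ∂μ - μ.real (S i) • c i‖ₑ ≤ ∑' i, ∫⁻ x in S i, w x ∂μ :=
        ENNReal.tsum_le_tsum fun i =>
          enorm_setIntegral_sub_measureReal_smul_le (hS_meas i) hf.integrableOn (hw i)
    _ = ∫⁻ x in ⋃ i, S i, w x ∂μ := (lintegral_iUnion hS_meas hS w).symm
    _ ≤ ∫⁻ x, w x ∂μ := setLIntegral_le_lintegral _ _

end ErrorEstimates

theorem MuMeasurable.aestronglyMeasurable {X Y : Type*} [MeasurableSpace X]
    [NormedAddCommGroup Y] {μ : Measure X} {f : X → Y} (hf : MuMeasurable μ f) :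
    AEStronglyMeasurable f μ :=
  let ⟨F, hF⟩ := hf
  aestronglyMeasurable_of_tendsto_ae atTop (fun n => (F n).aestronglyMeasurable) hF

namespace IsExhausting

variable {X : Type*} [MeasurableSpace X] {μ : Measure X} {Ω : Set X} {𝒮 𝒯 : Set (X × Set X)}
  {I : Set ℕ} {T : ℕ → X × Set X}

theorem mono (h : IsExhausting μ Ω 𝒮 I T) (h𝒮𝒯 : 𝒮 ⊆ 𝒯) : IsExhausting μ Ω 𝒯 I T :=
  ⟨fun i hi => h𝒮𝒯 (h.1 i hi), h.2⟩

theorem pairwise_disjoint (h : IsExhausting μ Ω 𝒮 I T) :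
    Pairwise (Function.onFun Disjoint fun i : I => (T i).2) :=
  fun i j hij => h.2.1 i i.2 j j.2 (Subtype.coe_ne_coe.2 hij)

theorem ae_mem_iUnion (h : IsExhausting μ univ 𝒮 I T) : ∀ᵐ x ∂μ, x ∈ ⋃ i : I, (T i).2 := by
  rw [← biUnion_eq_iUnion I fun i _ => (T i).2]
  exact mem_ae_iff.2 (compl_eq_univ_sdiff _ ▸ h.2.2)

end IsExhausting

theorem bochner_integral_morse_approx_general {X Y : Type*} [PseudoMetricSpace X]
    [MeasurableSpace X] [OpensMeasurableSpace X] [NormedAddCommGroup Y] [NormedSpace ℝ Y]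
    [CompleteSpace Y] (μ : Measure X) [μ.WeaklyRegular] [SigmaFinite μ]
    (f : X → Y) (hf : Integrable f μ) (ε : ℝ≥0∞) (hε : ε ≠ 0) :
    ∃ δ : X → ℝ, (∀ x : X, δ x ∈ Ioc (0 : ℝ) 1) ∧
      ∀ (I : Set ℕ) (T : ℕ → X × Set X),
        IsExhausting μ univ {p | MeasurableSet p.2} I T →
        (∀ i ∈ I, (T i).2 ⊆ closedBall (T i).1 (δ (T i).1)) →
        ∫⁻ y, ‖f y - ∑' i : I, (T i).2.indicator (fun _ => f (T i).1) y‖ₑ ∂μ < ε ∧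
        ∑' i : I, ‖∫ y in (T i).2, f y ∂μ - μ.real (T i).2 • f (T i).1‖ₑ < ε := by
  obtain ⟨ε', hε', hε'ε⟩ := exists_between hε.bot_lt
  obtain ⟨w, -, hw_int, hfw⟩ := exists_measurable_eventually_enorm_sub_le hf hε'.ne'
  obtain ⟨δ, hδ, hδw⟩ := exists_gauge_of_eventually hfw
  refine ⟨δ, hδ, fun I T hT hfine => ?_⟩
  have hfTw : ∀ i : I, ∀ y ∈ (T i).2, ‖f y - f (T i).1‖ₑ ≤ w y :=
    fun i y hy => hδw _ y (hfine i i.2 hy)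
  have hw_lt : ∫⁻ y, w y ∂μ < ε := hw_int.trans_lt hε'ε
  exact ⟨(lintegral_enorm_sub_tsum_indicator_le hT.pairwise_disjoint hT.ae_mem_iUnion hfTw).trans_lt
      hw_lt,
    (tsum_enorm_setIntegral_sub_measureReal_smul_le (fun i : I => hT.1 i i.2) hT.pairwise_disjoint
      hf hfTw).trans_lt hw_lt⟩

/-- Let `Y` be a Banach space and `f : X → Y` `μ`-measurable with `‖f‖` `μ`-integrable,
and fix `ε > 0`.  Given `λ ≥ 1` and any `μ`-a.e. `λ`-Morse cover `𝒮` of `X`, there is a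
gauge `δ : X → (0,1]` such that for every finite or countably infinite sequence
`⟨S_i(x_i)⟩` of `δ`-fine sets from `𝒮` that is `μ`-exhausting of `X`, the function
`Σ_i f(x_i)·χ_{S_i}` approximates `f` in the sense that
`∫_X ‖f(y) − Σ_i f(x_i)χ_{S_i}(y)‖ dμ(y) < ε`, and the absolute sum of local errors is
small: `Σ_i ‖∫_{S_i} f dμ − f(x_i)·μ(S_i)‖ < ε`. -/
theorem bochner_integral_morse_approx
    {X Y : Type*} [NormedAddCommGroup X] [NormedSpace ℝ X] [FiniteDimensional ℝ X]
    [MeasurableSpace X] [OpensMeasurableSpace X]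
    [NormedAddCommGroup Y] [NormedSpace ℝ Y] [CompleteSpace Y]
    (μ : Measure X) [μ.Regular] [μ.IsComplete]
    (f : X → Y) (hf : MuMeasurable μ f)
    (hint : Integrable (fun x => ‖f x‖) μ)
    (ε : ℝ) (hε : 0 < ε)
    (lam : ℝ) (hlam : 1 ≤ lam)
    (𝒮 : Set (X × Set X)) (h𝒮 : IsAEMorseCover μ lam Set.univ 𝒮) :
    ∃ δ : X → ℝ, (∀ x : X, δ x ∈ Set.Ioc (0:ℝ) 1) ∧
      ∀ (I : Set ℕ) (T : ℕ → X × Set X),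
        IsExhausting μ Set.univ 𝒮 I T →
        (∀ i ∈ I, (T i).2 ⊆ Metric.closedBall (T i).1 (δ (T i).1)) →
        (∫⁻ y, ‖f y - ∑' i : I, Set.indicator (T i).2 (fun _ => f (T i).1) y‖₊ ∂μ)
            < ENNReal.ofReal ε ∧
        (∑' i : I, (‖(∫ y in (T i).2, f y ∂μ) - (μ (T i).2).toReal • f (T i).1‖₊ : ENNReal))
            < ENNReal.ofReal ε := by
  have : ProperSpace X := FiniteDimensional.proper_real X
  have hf_int : Integrable f μ := (integrable_norm_iff hf.aestronglyMeasurable).1 hint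
  obtain ⟨δ, hδ, happrox⟩ := bochner_integral_morse_approx_general μ f hf_int
    (ENNReal.ofReal ε) (ENNReal.ofReal_pos.2 hε).ne'
  have h𝒮_meas : 𝒮 ⊆ {p | MeasurableSet p.2} := fun p hp => (h𝒮.1.1 p hp).2.1
  exact ⟨δ, hδ, fun I T hT => happrox I T (hT.mono h𝒮_meas)⟩
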